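/- For every t > 0 and every x ∈ X, the total outgoing reverse rate satisfies ∑_{j : Fin d, x j = m} ∑_{b : Fin S, b ≠ m} q_t (x[j ↦ b]) ≤ m̄(x) · (exp(−t)/(1 − exp(−t))) · q_t x, where m̄(x) is the number of coordinates i with x i = m. In particular, since exp(−t)/(1 − exp(−t)) ≤ 1/t, the left-hand side is at most (m̄(x)/t) · q_t x. -/

import Mathlib

open Finset

/-- Per-token absorbing transition kernel. -/
noncomputable def absK (S : ℕ) (m : Fin S) (t : ℝ) (a b : Fin S) : ℝ :=
  if a = b then (if a = m then 1 else Real.exp (-t))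
  else (if b = m then 1 - Real.exp (-t) else 0)

/-- Forward marginal at time `t` of the absorbing diffusion started at `q0`. -/
noncomputable def fwd (S d : ℕ) (m : Fin S) (q0 : (Fin d → Fin S) → ℝ) (t : ℝ)
    (x : Fin d → Fin S) : ℝ :=
  ∑ x0 : Fin d → Fin S, q0 x0 * ∏ i : Fin d, absK S m t (x0 i) (x i)

/-- Number of masked coordinates. -/
def nmask (S d : ℕ) (m : Fin S) (x : Fin d → Fin S) : ℕ :=
  (Finset.univ.filter (fun i => x i = m)).card

lemma absK_nonneg' (S : ℕ) (m : Fin S) (t : ℝ) (ht : 0 < t) (a b : Fin S) :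
    0 ≤ absK S m t a b := by
  have h1 : Real.exp (-t) < 1 := Real.exp_lt_one_iff.mpr (by linarith)
  have h0 := Real.exp_pos (-t)
  unfold absK
  split_ifs <;> linarith

lemma absK_sum_le (S : ℕ) (m : Fin S) (t : ℝ) (ht : 0 < t) (a : Fin S) :
    ∑ b ∈ Finset.univ.filter (fun b : Fin S => b ≠ m), absK S m t a b
      ≤ (Real.exp (-t) / (1 - Real.exp (-t))) * absK S m t a m := by
  have h1 : Real.exp (-t) < 1 := Real.exp_lt_one_iff.mpr (by linarith)
  have h0 := Real.exp_pos (-t)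
  have h2 : 0 < 1 - Real.exp (-t) := by linarith
  have e : ∑ b ∈ Finset.univ.filter (fun b : Fin S => b ≠ m), absK S m t a b
      = ∑ b ∈ Finset.univ.filter (fun b : Fin S => b ≠ m),
        if a = b then Real.exp (-t) else 0 := by
    refine Finset.sum_congr rfl fun b hb => ?_
    have hb' : b ≠ m := (Finset.mem_filter.mp hb).2
    unfold absK
    by_cases hab : a = b
    · subst hab; simp [hb']
    · simp [hab, hb']
  rw [e, Finset.sum_ite_eq]
  by_cases ha : a = m
  · subst ha
    simp [absK]
    positivity
  · simp [absK, ha]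
    rw [div_mul_cancel₀ _ h2.ne']

lemma fwd_sum_le (S d : ℕ) (m : Fin S) (q0 : (Fin d → Fin S) → ℝ) (hq0 : ∀ x, 0 ≤ q0 x)
    (t : ℝ) (ht : 0 < t) (x : Fin d → Fin S) (j : Fin d) (hj : x j = m) :
    ∑ b ∈ Finset.univ.filter (fun b : Fin S => b ≠ m), fwd S d m q0 t (Function.update x j b)
      ≤ (Real.exp (-t) / (1 - Real.exp (-t))) * fwd S d m q0 t x := by
  unfold fwd
  rw [Finset.sum_comm, Finset.mul_sum]
  refine Finset.sum_le_sum fun x0 _ => ?_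
  have hR : 0 ≤ ∏ i ∈ Finset.univ.erase j, absK S m t (x0 i) (x i) :=
    Finset.prod_nonneg fun i _ => absK_nonneg' S m t ht _ _
  have e1 : ∀ b, ∏ i, absK S m t (x0 i) (Function.update x j b i)
      = absK S m t (x0 j) b * ∏ i ∈ Finset.univ.erase j, absK S m t (x0 i) (x i) := by
    intro b
    rw [← Finset.mul_prod_erase _ _ (Finset.mem_univ j), Function.update_self]
    congr 1
    refine Finset.prod_congr rfl fun i hi => ?_
    rw [Function.update_of_ne (Finset.ne_of_mem_erase hi)]
  have e2 : ∏ i, absK S m t (x0 i) (x i)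
      = absK S m t (x0 j) m * ∏ i ∈ Finset.univ.erase j, absK S m t (x0 i) (x i) := by
    rw [← Finset.mul_prod_erase _ _ (Finset.mem_univ j), hj]
  simp_rw [e1]
  rw [e2, ← Finset.mul_sum, ← Finset.sum_mul]
  have := mul_le_mul_of_nonneg_left
    (mul_le_mul_of_nonneg_right (absK_sum_le S m t ht (x0 j)) hR) (hq0 x0)
  linarith

/-- The total outgoing reverse rate at `x` is at most
`m̄(x) · e^{-t}/(1 - e^{-t}) · q_t(x) ≤ (m̄(x)/t) · q_t(x)`. -/
theorem absorbing_total_reverse_rate_bound (S d : ℕ) (hS : 2 ≤ S) (hd : 1 ≤ d) (m : Fin S)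
    (q0 : (Fin d → Fin S) → ℝ) (hq0 : ∀ x, 0 ≤ q0 x)
    (hq0sum : ∑ x : Fin d → Fin S, q0 x = 1) :
    ∀ t : ℝ, 0 < t → ∀ x : Fin d → Fin S,
      (∑ j ∈ Finset.univ.filter (fun j : Fin d => x j = m),
          ∑ b ∈ Finset.univ.filter (fun b : Fin S => b ≠ m),
            fwd S d m q0 t (Function.update x j b))
        ≤ (nmask S d m x : ℝ) * (Real.exp (-t) / (1 - Real.exp (-t))) * fwd S d m q0 t x ∧
      (∑ j ∈ Finset.univ.filter (fun j : Fin d => x j = m),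
          ∑ b ∈ Finset.univ.filter (fun b : Fin S => b ≠ m),
            fwd S d m q0 t (Function.update x j b))
        ≤ ((nmask S d m x : ℝ) / t) * fwd S d m q0 t x := by
  intro t ht x
  have h1 : Real.exp (-t) < 1 := Real.exp_lt_one_iff.mpr (by linarith)
  have h2 : 0 < 1 - Real.exp (-t) := by linarith
  have hF : 0 ≤ fwd S d m q0 t x := Finset.sum_nonneg fun x0 _ =>
    mul_nonneg (hq0 x0) (Finset.prod_nonneg fun i _ => absK_nonneg' S m t ht _ _)
  have hc : Real.exp (-t) / (1 - Real.exp (-t)) ≤ 1 / t := by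
    rw [div_le_div_iff₀ h2 ht]
    have h3 := Real.add_one_le_exp t
    have h4 : Real.exp (-t) * Real.exp t = 1 := by rw [← Real.exp_add]; simp
    nlinarith [Real.exp_pos (-t)]
  have A := Finset.sum_le_sum (s := Finset.univ.filter (fun j : Fin d => x j = m))
    fun j hj => fwd_sum_le S d m q0 hq0 t ht x j (Finset.mem_filter.mp hj).2
  rw [Finset.sum_const, nsmul_eq_mul, ← mul_assoc] at A
  refine ⟨A, A.trans ?_⟩
  rw [div_eq_mul_one_div (nmask S d m x : ℝ) t]
  exact mul_le_mul_of_nonneg_right (mul_le_mul_of_nonneg_left hc (Nat.cast_nonneg _)) hF
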